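/- The number of minimal elements of the poset S_n^{(d,e,k)} = Q_{dn+e}(r,d,k) ∖ {0̂} is N(n) = (dn+e)! · r^{(d−1)n} / (n! · e! · [(d/k)!]^{kn} · k^{dn}). -/

import Mathlib

/-- An element of the Dowling lattice `Q_n(μ_r)`: an equivalence class of `μ_r`-labelled
partial partitions of `{1, ..., n}`.  It is encoded by its zero block `zero`, the
"same nonzero block" relation `rel` (an equivalence relation on the complement of `zero`),
and the relative labelling `lab i j = γ(i)⁻¹ γ(j) ∈ μ_r` for `i, j` in a common nonzero
block (normalised to `1` for unrelated pairs); this data is exactly an equivalence class of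
`G`-prepartitions `(I, π, γ)` for `G = μ_r`. -/
structure DowlingElt (n r : ℕ) where
  zero : Set (Fin n)
  rel : Fin n → Fin n → Prop
  lab : Fin n → Fin n → ℂ
  rel_compl : ∀ i j, rel i j → i ∉ zero ∧ j ∉ zero
  rel_refl : ∀ i, i ∉ zero → rel i i
  rel_symm : ∀ i j, rel i j → rel j i
  rel_trans : ∀ i j k, rel i j → rel j k → rel i k
  lab_root : ∀ i j, lab i j ^ r = 1
  lab_one : ∀ i j, ¬ rel i j → lab i j = 1
  lab_refl : ∀ i, lab i i = 1
  lab_symm : ∀ i j, rel i j → lab i j * lab j i = 1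
  lab_cocycle : ∀ i j k, rel i j → rel j k → lab i k = lab i j * lab j k

/-- The partial order of the Dowling lattice `Q_n(r)`: `x ≤ y` iff `y` is obtained from `x`
by merges, i.e. the zero block grows, and each nonzero block of `x` is either absorbed into
the zero block of `y` or contained (with compatible labels) in a nonzero block of `y`. -/
instance DowlingElt.instPreorder (n r : ℕ) : Preorder (DowlingElt n r) where
  le x y := x.zero ⊆ y.zero ∧
    ∀ i j, x.rel i j → (i ∈ y.zero ∧ j ∈ y.zero) ∨ (y.rel i j ∧ y.lab i j = x.lab i j)
  le_refl x := ⟨subset_rfl, fun i j h => Or.inr ⟨h, rfl⟩⟩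
  le_trans x y z h1 h2 := by
    refine ⟨h1.1.trans h2.1, fun i j h => ?_⟩
    rcases h1.2 i j h with hi | ⟨hr, hl⟩
    · exact Or.inl ⟨h2.1 hi.1, h2.1 hi.2⟩
    · rcases h2.2 i j hr with hi | ⟨hr', hl'⟩
      · exact Or.inl hi
      · exact Or.inr ⟨hr', hl'.trans hl⟩


/-- `d`-divisibility: every nonzero block has size divisible by `d`. -/
def DDiv {n r : ℕ} (d : ℕ) (x : DowlingElt n r) : Prop :=
  ∀ i, i ∉ x.zero → d ∣ Nat.card {j : Fin n // x.rel i j}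

/-- `k`-even colouring: identifying `μ_r` with `ℤ/r`, the colour of an element is its label
modulo `k`, detected by the `(r/k)`-th power of the label; within each nonzero block, every
colour class (measured relative to any base point `i` of the block) has the same size. -/
def EvenCol {n r : ℕ} (k : ℕ) (x : DowlingElt n r) : Prop :=
  ∀ i, i ∉ x.zero → ∀ ξ ζ : ℂ, ξ ^ k = 1 → ζ ^ k = 1 →
    Nat.card {j : Fin n // x.rel i j ∧ x.lab i j ^ (r / k) = ξ} =
      Nat.card {j : Fin n // x.rel i j ∧ x.lab i j ^ (r / k) = ζ}


/-!
Write `d = kq` and `r = ks`, so that the colour of a label in `μ_r` is its `s`-th power in `μ_k`.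

An element is minimal exactly when its zero block has fewer than `d` points and every colour occurs
exactly `q` times in each nonzero block: otherwise `q` points of each colour can be split off, from
a block or (with freely chosen labels) from the zero block, to form a new block and a smaller
element; conversely, in a smaller element the nonzero blocks still have at least `d` points, and the
size of the zero block is determined modulo `d`.

On `dn + e` points with `e < d` this forces `n` nonzero blocks.  Number them and choose actual
labels: each minimal element arises in this way from `n! rⁿ` maps to `Option (Fin n × μ_r)`.  These
maps are counted by first choosing the block and the colour of each point, which gives the
multinomial coefficient `(dn+e)! / (e! q!^{kn})`, and then one of the `s` labels of the given colour
for each of the `dn` points outside the zero block.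
-/

section Counting

variable {α β γ : Type*}

theorem card_eq_card_mul_of_ncard_preimage_singleton [Finite α] {f : α → β} {m : ℕ}
    (hf : ∀ b, (f ⁻¹' {b}).ncard = m) : Nat.card α = Nat.card β * m := by
  have fiberEquiv (b : β) : {a // f a = b} ≃ Fin m := Finite.equivFinOfCardEq (hf b)
  have equivProd : α ≃ β × Fin m := (Equiv.sigmaFiberEquiv f).symm.trans
    ((Equiv.sigmaCongrRight fiberEquiv).trans (Equiv.sigmaEquivProd β (Fin m)))
  rw [Nat.card_congr equivProd, Nat.card_prod, Nat.card_fin]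

theorem sum_ncard_preimage_singleton [Finite α] [Fintype β] (f : α → β) :
    ∑ b, (f ⁻¹' {b}).ncard = Nat.card α :=
  Nat.card_sigma.symm.trans (Nat.card_congr (Equiv.sigmaFiberEquiv f))

theorem exists_ncard_preimage_singleton_eq [Finite α] [Fintype β] {w : β → ℕ}
    (hw : ∑ b, w b = Nat.card α) : ∃ g : α → β, ∀ b, (g ⁻¹' {b}).ncard = w b := by
  obtain ⟨e⟩ : Nonempty (α ≃ Σ b, Fin (w b)) :=
    (Finite.card_eq (β := Σ b, Fin (w b))).1 (by simp [hw])
  refine ⟨fun a => (e a).1, fun b => ?_⟩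
  rw [← Nat.card_fin (w b)]
  exact Nat.card_congr ((e.subtypeEquiv fun _ => Iff.rfl).trans (Equiv.sigmaSubtype b))

theorem exists_ncard_sep_eq [Finite β] [Nonempty β] {T : Set α} {q : ℕ}
    (hfin : T.Finite) (hT : T.ncard = Nat.card β * q) :
    ∃ g : α → β, ∀ b, {a ∈ T | g a = b}.ncard = q := by
  have := hfin.to_subtype
  have := Fintype.ofFinite β
  obtain ⟨g, hg⟩ := exists_ncard_preimage_singleton_eq (α := T) (β := β) (w := fun _ => q)
    (by simp [hT])
  obtain ⟨g', hg'⟩ := (Subtype.val_injective.surjective_comp_right (γ := β)) g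
  refine ⟨g', fun b => ?_⟩
  rw [← hg b, ← Set.ncard_image_of_injective _ Subtype.val_injective]
  congr 1
  ext a
  simp [← hg', and_comm]

theorem exists_perm_comp_eq [Finite α] {g h : α → β}
    (hgh : ∀ b, (g ⁻¹' {b}).ncard = (h ⁻¹' {b}).ncard) : ∃ τ : Equiv.Perm α, h ∘ τ = g := by
  have fiberEquiv (b : β) : Nonempty ({a // g a = b} ≃ {a // h a = b}) :=
    Finite.card_eq.1 (hgh b)
  exact ⟨Equiv.ofFiberEquiv fun b => (fiberEquiv b).some,
    funext fun a => Equiv.ofFiberEquiv_map _ a⟩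

theorem orbit_domMulAct_perm_eq [Finite α] (g₀ : α → β) :
    MulAction.orbit (Equiv.Perm α)ᵈᵐᵃ g₀ = {g | ∀ b, (g ⁻¹' {b}).ncard = (g₀ ⁻¹' {b}).ncard} := by
  ext g
  constructor
  · rintro ⟨τ, rfl⟩ b
    exact Nat.card_congr ((DomMulAct.mk.symm τ).subtypeEquiv fun _ => Iff.rfl)
  · intro hg
    obtain ⟨τ, hτ⟩ := exists_perm_comp_eq hg
    exact ⟨DomMulAct.mk τ, hτ⟩

theorem card_stabilizer_domMulAct_perm [Finite α] [Fintype β] (g₀ : α → β) :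
    Nat.card (MulAction.stabilizer (Equiv.Perm α)ᵈᵐᵃ g₀) =
      ∏ b, (g₀ ⁻¹' {b}).ncard.factorial := by
  rw [Nat.card_congr (MulOpposite.opEquiv.trans (DomMulAct.stabilizerMulEquiv g₀).toEquiv),
    Nat.card_pi]
  exact Finset.prod_congr rfl fun b _ => Nat.card_perm

theorem card_fun_ncard_preimage_singleton_mul_prod_factorial [Finite α] [Fintype β] {w : β → ℕ}
    (hw : ∑ b, w b = Nat.card α) :
    Nat.card {g : α → β // ∀ b, (g ⁻¹' {b}).ncard = w b} * ∏ b, (w b).factorial =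
      (Nat.card α).factorial := by
  obtain ⟨g₀, hg₀⟩ := exists_ncard_preimage_singleton_eq hw
  have orbit_stabilizer := (MulAction.stabilizer (Equiv.Perm α)ᵈᵐᵃ g₀).card_mul_index
  rw [MulAction.index_stabilizer, orbit_domMulAct_perm_eq, card_stabilizer_domMulAct_perm,
    Nat.card_congr DomMulAct.mk.symm, Nat.card_perm, mul_comm] at orbit_stabilizer
  simp only [hg₀] at orbit_stabilizer
  exact orbit_stabilizer

theorem card_fun_comp_eq [Fintype α] (p : β → γ) (g : α → γ) :
    Nat.card {f : α → β // p ∘ f = g} = ∏ a, (p ⁻¹' {g a}).ncard := by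
  have equivPi : {f : α → β // p ∘ f = g} ≃ ∀ a, {b // p b = g a} :=
    (Equiv.subtypeEquivRight fun _ => funext_iff).trans
      (Equiv.subtypePiEquivPi (p := fun a b => p b = g a))
  rw [Nat.card_congr equivPi, Nat.card_pi]
  rfl

theorem card_fun_comp_ncard_preimage_singleton [Finite α] [Finite β] [Fintype γ] (p : β → γ)
    (w : γ → ℕ) :
    Nat.card {f : α → β // ∀ c, ((p ∘ f) ⁻¹' {c}).ncard = w c} =
      Nat.card {g : α → γ // ∀ c, (g ⁻¹' {c}).ncard = w c} *
        ∏ c, (p ⁻¹' {c}).ncard ^ w c := by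
  classical
  have := Fintype.ofFinite α
  let compose (f : {f : α → β // ∀ c, ((p ∘ f) ⁻¹' {c}).ncard = w c}) :
      {g : α → γ // ∀ c, (g ⁻¹' {c}).ncard = w c} := ⟨p ∘ f.1, f.2⟩
  refine card_eq_card_mul_of_ncard_preimage_singleton (f := compose) fun ⟨g, hg⟩ => ?_
  have lifts : compose ⁻¹' {⟨g, hg⟩} ≃ {f : α → β // p ∘ f = g} :=
    (Equiv.subtypeEquivRight fun _ => Subtype.ext_iff).trans
      (Equiv.subtypeSubtypeEquivSubtype (q := fun f => p ∘ f = g) fun h => h ▸ hg)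
  rw [← Nat.card_coe_set_eq, Nat.card_congr lifts, card_fun_comp_eq,
    ← Fintype.prod_fiberwise' g fun c => (p ⁻¹' {c}).ncard]
  refine Finset.prod_congr rfl fun c _ => ?_
  rw [Finset.prod_const, Finset.card_univ, ← Nat.card_eq_fintype_card, ← hg c]
  rfl

end Counting

section Colour

/-- The colour of a label: `μ_{ks} ≅ ℤ/ks → ℤ/k ≅ μ_k`, reduction modulo `k`, realised as the
`s`-th power map. -/
def colour (k s : ℕ) : rootsOfUnity (k * s) ℂ →* rootsOfUnity k ℂ :=
  ((powMonoidHom s).comp (rootsOfUnity (k * s) ℂ).subtype).codRestrict _ fun a =>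
    (pow_mul' (a : ℂˣ) k s).symm.trans a.2

variable {k s : ℕ}

theorem coe_colour (a : rootsOfUnity (k * s) ℂ) :
    ((colour k s a : ℂˣ) : ℂ) = ((a : ℂˣ) : ℂ) ^ s :=
  rfl

theorem colour_surjective [NeZero k] [NeZero s] : Function.Surjective (colour k s) := by
  intro z
  obtain ⟨w, hw⟩ := IsAlgClosed.exists_pow_nat_eq ((z : ℂˣ) : ℂ) (NeZero.pos s)
  have w_root : w ^ (k * s) = 1 := by
    rw [mul_comm, pow_mul, hw, ← mem_rootsOfUnity']
    exact z.2
  exact ⟨rootsOfUnity.mkOfPowEq w w_root, rootsOfUnity.coe_injective hw⟩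

theorem ncard_colour_fiber [NeZero k] [NeZero s] (z : rootsOfUnity k ℂ) :
    (colour k s ⁻¹' {z}).ncard = s := by
  have fiber_eq (z : rootsOfUnity k ℂ) :
      (colour k s ⁻¹' {z}).ncard = Nat.card (colour k s).ker :=
    Nat.card_congr (MonoidHom.fiberEquivKerOfSurjective colour_surjective z)
  have card_eq := card_eq_card_mul_of_ncard_preimage_singleton fiber_eq
  rw [Complex.card_rootsOfUnity, Complex.card_rootsOfUnity] at card_eq
  exact (fiber_eq z).trans (Nat.eq_of_mul_eq_mul_left (NeZero.pos k) card_eq).symm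

end Colour

namespace DowlingElt

variable {N r : ℕ} {x y : DowlingElt N r} {i j : Fin N}

theorem rel_of_le (hxy : x ≤ y) (hi : i ∉ y.zero) (hij : x.rel i j) :
    y.rel i j ∧ y.lab i j = x.lab i j :=
  (hxy.2 i j hij).resolve_left fun h => hi h.1

theorem ext_of_rel (zero_eq : x.zero = y.zero) (rel_iff : ∀ i j, x.rel i j ↔ y.rel i j)
    (lab_eq : ∀ i j, x.rel i j → x.lab i j = y.lab i j) : x = y := by
  have lab_eq' (i j : Fin N) : x.lab i j = y.lab i j := by
    by_cases h : x.rel i j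
    · exact lab_eq i j h
    · rw [x.lab_one i j h, y.lab_one i j (mt (rel_iff i j).2 h)]
  cases x
  cases y
  congr
  · exact funext₂ fun i j => propext (rel_iff i j)
  · exact funext₂ lab_eq'

theorem eq_of_le_of_le (hxy : x ≤ y) (hyx : y ≤ x) : x = y := by
  have zero_eq : x.zero = y.zero := hxy.1.antisymm hyx.1
  have rel_imp (i j : Fin N) (h : x.rel i j) : y.rel i j ∧ y.lab i j = x.lab i j :=
    rel_of_le hxy (zero_eq ▸ (x.rel_compl i j h).1) h
  have rel_imp' (i j : Fin N) (h : y.rel i j) : x.rel i j :=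
    (rel_of_le hyx (zero_eq ▸ (y.rel_compl i j h).1) h).1
  exact ext_of_rel zero_eq (fun i j => ⟨fun h => (rel_imp i j h).1, rel_imp' i j⟩)
    fun i j h => (rel_imp i j h).2.symm

theorem le_of_le_of_ncard_le (hyx : y ≤ x) (zero_le : x.zero.ncard ≤ y.zero.ncard)
    (rel_le : ∀ i ∉ x.zero, {j | x.rel i j}.ncard ≤ {j | y.rel i j}.ncard) : x ≤ y := by
  have zero_eq : y.zero = x.zero := Set.eq_of_subset_of_ncard_le hyx.1 zero_le
  refine ⟨zero_eq.ge, fun i j hij => Or.inr ?_⟩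
  have hi : i ∉ x.zero := (x.rel_compl i j hij).1
  have rel_eq : {j | y.rel i j} = {j | x.rel i j} :=
    Set.eq_of_subset_of_ncard_le (fun j h => (rel_of_le hyx hi h).1) (rel_le i hi)
  have hij' : y.rel i j := rel_eq.ge hij
  exact ⟨hij', (rel_of_le hyx hi hij').2.symm⟩

end DowlingElt

/-- The prepartitions `(I, π, γ)` behind the elements of a Dowling lattice: a point sent to `none`
lies in the zero block, and a point sent to `some (l, a)` lies in the block indexed by `l` and
carries the label `a`.  The block indices are arbitrary, and blocks may be empty. -/
abbrev Prepartition (ι L G : Type*) := ι → Option (L × G)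

namespace Prepartition

section Blocks

variable {ι L G H : Type*}

/-- The set of points of `f` that lie in no indexed block. -/
def zeroBlock (f : Prepartition ι L G) : Set ι := {i | f i = none}

/-- The set of points of `f` that lie in the block indexed by `l`. -/
def block (f : Prepartition ι L G) (l : L) : Set ι := {i | ∃ a, f i = some (l, a)}

/-- The set of points of the block indexed by `l` whose label has colour `z`, for a colouring `c` of
the labels. -/
def colourClass (c : G → H) (f : Prepartition ι L G) (l : L) (z : H) : Set ι :=
  {i | ∃ a, f i = some (l, a) ∧ c a = z}

/-- Every block index is in use. -/
def BlocksNonempty (f : Prepartition ι L G) : Prop := ∀ l, (f.block l).Nonempty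

/-- Every colour occurs equally often in each block, the common number being a multiple of `q`: the
condition on the elements of `Q_N(r, d, k)` when `d = kq` and there are `k` colours. -/
def IsEvenlyColoured (c : G → H) (q : ℕ) (f : Prepartition ι L G) : Prop :=
  ∀ l, ∃ m, ∀ z, (f.colourClass c l z).ncard = m * q

/-- Every colour occurs exactly `q` times in each block: the condition characterising the minimal
elements of `Q_N(r, d, k)` when `d = kq` and there are `k` colours. -/
def IsEquicoloured (c : G → H) (q : ℕ) (f : Prepartition ι L G) : Prop :=
  ∀ l z, (f.colourClass c l z).ncard = q

variable {f : Prepartition ι L G} {c : G → H} {q : ℕ}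

theorem IsEquicoloured.isEvenlyColoured (hf : f.IsEquicoloured c q) : f.IsEvenlyColoured c q :=
  fun l => ⟨1, fun z => (hf l z).trans (one_mul q).symm⟩

theorem IsEquicoloured.blocksNonempty [Nonempty H] [NeZero q] (hf : f.IsEquicoloured c q) :
    f.BlocksNonempty := by
  intro l
  obtain ⟨z⟩ := ‹Nonempty H›
  obtain ⟨i, a, hi, -⟩ := Set.nonempty_of_ncard_ne_zero ((hf l z).trans_ne (NeZero.ne q))
  exact ⟨i, a, hi⟩

theorem ncard_block_eq_sum [Finite ι] [Fintype H] (c : G → H) (f : Prepartition ι L G) (l : L) :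
    (f.block l).ncard = ∑ z, (f.colourClass c l z).ncard := by
  have block_eq : f.block l = ⋃ z, f.colourClass c l z := by
    ext i
    simp [block, colourClass]
  have disjoint : Pairwise (Function.onFun Disjoint (f.colourClass c l)) := by
    intro z z' hz
    refine Set.disjoint_left.2 ?_
    rintro i ⟨a, hi, rfl⟩ ⟨b, hi', rfl⟩
    simp_all
  rw [block_eq, Set.ncard_iUnion_of_finite (fun _ => Set.toFinite _) disjoint,
    finsum_eq_sum_of_fintype]

theorem ncard_block_of_forall_ncard_colourClass [Finite ι] [Finite H] {l : L} {m : ℕ}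
    (hm : ∀ z, (f.colourClass c l z).ncard = m) : (f.block l).ncard = Nat.card H * m := by
  have := Fintype.ofFinite H
  simp [ncard_block_eq_sum c, hm]

theorem ncard_zeroBlock_add_sum_ncard_block [Finite ι] [Fintype L] (f : Prepartition ι L G) :
    f.zeroBlock.ncard + ∑ l, (f.block l).ncard = Nat.card ι := by
  let blockIndex (i : ι) : Option L := (f i).map Prod.fst
  have zeroBlock_eq : blockIndex ⁻¹' {none} = f.zeroBlock := by
    ext i
    simp [blockIndex, zeroBlock]
  have block_eq (l : L) : blockIndex ⁻¹' {some l} = f.block l := by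
    ext i
    simp [blockIndex, block]
  rw [← sum_ncard_preimage_singleton blockIndex, Fintype.sum_option, zeroBlock_eq]
  simp only [block_eq]

theorem IsEvenlyColoured.ncard_zeroBlock_modEq [Finite ι] [Finite H] [Finite L]
    (hf : f.IsEvenlyColoured c q) : f.zeroBlock.ncard ≡ Nat.card ι [MOD Nat.card H * q] := by
  have := Fintype.ofFinite L
  have dvd_sum : Nat.card H * q ∣ ∑ l, (f.block l).ncard := by
    refine Finset.dvd_sum fun l _ => ?_
    obtain ⟨m, hm⟩ := hf l
    rw [ncard_block_of_forall_ncard_colourClass hm]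
    exact mul_dvd_mul_left _ (Nat.dvd_mul_left q m)
  rw [← ncard_zeroBlock_add_sum_ncard_block f]
  exact (Nat.modEq_zero_iff_dvd.2 dvd_sum).symm.add_left _

theorem IsEquicoloured.ncard_zeroBlock_add [Finite ι] [Finite H] [Finite L]
    (hf : f.IsEquicoloured c q) :
    f.zeroBlock.ncard + Nat.card L * (Nat.card H * q) = Nat.card ι := by
  have := Fintype.ofFinite L
  rw [← ncard_zeroBlock_add_sum_ncard_block f]
  simp [ncard_block_of_forall_ncard_colourClass (hf _)]

theorem colourClass_subset_block (c : G → H) (f : Prepartition ι L G) (l : L) (z : H) :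
    f.colourClass c l z ⊆ f.block l :=
  fun _ ⟨a, hi, _⟩ => ⟨a, hi⟩

theorem IsEvenlyColoured.exists_subset_block [Finite ι] (hf : f.IsEvenlyColoured c q) {l : L}
    (hl : (f.block l).Nonempty) :
    ∃ T ⊆ f.block l, ∀ z, (f.colourClass c l z ∩ T).ncard = q := by
  obtain ⟨m, hm⟩ := hf l
  obtain ⟨i, a, hi⟩ := hl
  have m_pos : 0 < m := by
    have ne_zero := Set.ncard_ne_zero_of_mem (s := f.colourClass c l _) ⟨a, hi, rfl⟩
    exact Nat.pos_of_ne_zero (left_ne_zero_of_mul (hm _ ▸ ne_zero))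
  have q_le (z : H) : q ≤ (f.colourClass c l z).ncard :=
    (Nat.le_mul_of_pos_left q m_pos).trans_eq (hm z).symm
  choose S S_subset ncard_S using fun z => Set.exists_subset_card_eq (q_le z)
  refine ⟨⋃ z, S z, Set.iUnion_subset fun z => (S_subset z).trans
    (colourClass_subset_block c f l z), fun z => ?_⟩
  rw [← ncard_S z]
  congr 1
  refine Set.Subset.antisymm ?_ fun j hj => ⟨S_subset z hj, Set.mem_iUnion_of_mem z hj⟩
  rintro j ⟨⟨a, hja, rfl⟩, hj⟩
  obtain ⟨z', hjz'⟩ := Set.mem_iUnion.1 hj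
  obtain ⟨b, hjb, rfl⟩ := S_subset z' hjz'
  obtain rfl : a = b := by simpa [hja] using hjb
  exact hjz'

end Blocks

section Merge

variable {ι L L' G : Type*} [Group G]

/-- The prepartition obtained from `f` by sending each block `l` to the zero block if `σ l = none`,
and to the block `l'` with labels multiplied on the left by `u` if `σ l = some (l', u)`. -/
def merge (σ : L → Option (L' × G)) (f : Prepartition ι L G) : Prepartition ι L' G :=
  fun i => (f i).bind fun p => (σ p.1).map fun t => (t.1, t.2 * p.2)

/-- The change of block indices along `π` and of labels by the factors `u`. -/
def relabel (π : L → L') (u : L → G) (f : Prepartition ι L G) : Prepartition ι L' G :=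
  f.merge fun l => some (π l, u l)

variable {f : Prepartition ι L G} {i : ι} {l : L} {a : G}

theorem merge_of_eq_none (σ : L → Option (L' × G)) (hi : f i = none) : f.merge σ i = none := by
  simp [merge, hi]

theorem merge_of_eq_some (σ : L → Option (L' × G)) (hi : f i = some (l, a)) :
    f.merge σ i = (σ l).map fun p => (p.1, p.2 * a) := by
  simp [merge, hi]

theorem relabel_of_eq_some (π : L → L') (u : L → G) (hi : f i = some (l, a)) :
    f.relabel π u i = some (π l, u l * a) := by
  simp [relabel, merge, hi]

theorem relabel_symm_relabel (π : L ≃ L') (u : L → G) (f : Prepartition ι L G) :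
    (f.relabel π u).relabel π.symm (fun l' => (u (π.symm l'))⁻¹) = f := by
  funext i
  rcases hi : f i with _ | ⟨l, a⟩ <;> simp [relabel, merge, hi]

theorem BlocksNonempty.relabel (hf : f.BlocksNonempty) (π : L ≃ L') (u : L → G) :
    (f.relabel π u).BlocksNonempty := by
  intro l'
  obtain ⟨i, a, hi⟩ := hf (π.symm l')
  exact ⟨i, _, by simpa using relabel_of_eq_some π u hi⟩

theorem BlocksNonempty.relabel_inj (hf : f.BlocksNonempty) {π π' : L → L'} {u u' : L → G}
    (h : f.relabel π u = f.relabel π' u') : π = π' ∧ u = u' := by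
  simp only [funext_iff, ← forall_and]
  intro l
  obtain ⟨i, a, hi⟩ := hf l
  simpa [relabel_of_eq_some _ _ hi] using congrFun h i

end Merge

section Split

variable {ι L G H : Type*}

open Classical in
/-- The prepartition obtained from `f` by moving the points of `T` into a new block, indexed by
`none`, with labels `γ`. -/
noncomputable def split (f : Prepartition ι L G) (T : Set ι) (γ : ι → G) :
    Prepartition ι (Option L) G :=
  fun i => if i ∈ T then some (none, γ i) else (f i).map (Prod.map some id)

variable {f : Prepartition ι L G} {T : Set ι} {γ : ι → G} {c : G → H} {o : Option L} {q : ℕ}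

theorem split_of_mem {i : ι} (hi : i ∈ T) : f.split T γ i = some (none, γ i) := if_pos hi

theorem split_of_notMem {i : ι} (hi : i ∉ T) : f.split T γ i = (f i).map (Prod.map some id) :=
  if_neg hi

theorem colourClass_split_none (z : H) :
    (f.split T γ).colourClass c none z = {i ∈ T | c (γ i) = z} := by
  ext i
  by_cases hi : i ∈ T <;> simp [colourClass, hi, split_of_mem, split_of_notMem]

theorem colourClass_split_some (l : L) (z : H) :
    (f.split T γ).colourClass c (some l) z = f.colourClass c l z \ T := by
  ext i
  by_cases hi : i ∈ T <;> simp [colourClass, hi, split_of_mem, split_of_notMem]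

theorem merge_split [Group G] (hT : ∀ i ∈ T, f i = o.map fun l => (l, γ i)) :
    (f.split T γ).merge (fun l => (l.elim o some).map fun l => (l, 1)) = f := by
  funext i
  by_cases hi : i ∈ T
  · rw [merge_of_eq_some _ (split_of_mem hi), hT i hi]
    simp [Function.comp_def]
  · rcases hf : f i with _ | ⟨l, a⟩ <;> simp [merge, split_of_notMem hi, hf]

theorem colourClass_inter_eq (hT : ∀ i ∈ T, f i = o.map fun l => (l, γ i)) (l : L) (z : H) :
    f.colourClass c l z ∩ T = {i ∈ T | o = some l ∧ c (γ i) = z} := by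
  ext i
  simp only [colourClass, Set.mem_inter_iff, Set.mem_ofPred_eq, and_comm (b := i ∈ T)]
  refine and_congr_right fun hi => ?_
  simp only [hT i hi, Option.map_eq_some_iff, Prod.mk.injEq]
  grind

theorem IsEvenlyColoured.split [Finite ι] (hf : f.IsEvenlyColoured c q)
    (hT : ∀ i ∈ T, f i = o.map fun l => (l, γ i)) (hq : ∀ z, {i ∈ T | c (γ i) = z}.ncard = q) :
    (f.split T γ).IsEvenlyColoured c q := by
  rintro (_ | l)
  · exact ⟨1, fun z => by rw [colourClass_split_none, hq, one_mul]⟩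
  obtain ⟨m, hm⟩ := hf l
  have count (z : H) := Set.ncard_inter_add_ncard_sdiff_eq_ncard (f.colourClass c l z) T
  simp only [colourClass_inter_eq hT, hm] at count
  by_cases hol : o = some l
  · simp only [hol, true_and, hq] at count
    refine ⟨m - 1, fun z => ?_⟩
    rw [colourClass_split_some, Nat.sub_mul, one_mul, ← count z, Nat.add_sub_cancel_left]
  · simp only [hol, false_and, and_false, Set.ofPred_false, Set.ncard_empty, zero_add] at count
    exact ⟨m, fun z => (congrArg Set.ncard (colourClass_split_some l z)).trans (count z)⟩

end Split

section Count

variable {ι L G H : Type*} {c : G → H} {q e s : ℕ}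

theorem preimage_map_comp_none (c : G → H) (f : Prepartition ι L G) :
    (Option.map (Prod.map id c) ∘ f) ⁻¹' {none} = f.zeroBlock := by
  ext i
  simp [zeroBlock]

theorem preimage_map_comp_some (c : G → H) (f : Prepartition ι L G) (l : L) (z : H) :
    (Option.map (Prod.map id c) ∘ f) ⁻¹' {some (l, z)} = f.colourClass c l z := by
  ext i
  simp [colourClass]

theorem ncard_preimage_map_none (c : G → H) :
    (Option.map (Prod.map (id : L → L) c) ⁻¹' {none}).ncard = 1 := by
  have singleton_eq : Option.map (Prod.map (id : L → L) c) ⁻¹' {none} = {none} := by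
    ext
    simp
  rw [singleton_eq, Set.ncard_singleton]

theorem ncard_preimage_map_some (c : G → H) (p : L × H) :
    (Option.map (Prod.map id c) ⁻¹' {some p}).ncard = (c ⁻¹' {p.2}).ncard := by
  have image_eq : Option.map (Prod.map id c) ⁻¹' {some p} =
      (fun a => some (p.1, a)) '' (c ⁻¹' {p.2}) := by
    ext (_ | ⟨l, a⟩) <;> simp [Prod.ext_iff, and_comm, eq_comm]
  rw [image_eq, Set.ncard_image_of_injective _ fun a b h => by simpa using h]

theorem isEquicoloured_iff_ncard_preimage [Finite ι] [Finite L] [Finite H]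
    (hι : Nat.card ι = Nat.card L * (Nat.card H * q) + e) (f : Prepartition ι L G) :
    f.IsEquicoloured c q ↔
      ∀ p, ((Option.map (Prod.map id c) ∘ f) ⁻¹' {p}).ncard = p.elim e fun _ => q := by
  simp only [Option.forall, Prod.forall, preimage_map_comp_none, preimage_map_comp_some,
    Option.elim]
  refine ⟨fun hf => ⟨?_, hf⟩, And.right⟩
  have := hf.ncard_zeroBlock_add
  omega

theorem card_isEquicoloured_mul [Finite ι] [Finite L] [Finite G] [Finite H]
    (hc : ∀ z, (c ⁻¹' {z}).ncard = s) (hι : Nat.card ι = Nat.card L * (Nat.card H * q) + e) :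
    Nat.card {f : Prepartition ι L G // f.IsEquicoloured c q} *
        (e.factorial * q.factorial ^ (Nat.card L * Nat.card H)) =
      (Nat.card ι).factorial * s ^ (Nat.card L * (Nat.card H * q)) := by
  have := Fintype.ofFinite L
  have := Fintype.ofFinite H
  let w : Option (L × H) → ℕ := fun p => p.elim e fun _ => q
  have sum_w : ∑ p, w p = Nat.card ι := by
    rw [hι, add_comm, ← mul_assoc]
    simp [w, Fintype.sum_option]
  have prod_factorial : ∏ p, (w p).factorial =
      e.factorial * q.factorial ^ (Nat.card L * Nat.card H) := by
    simp [w, Fintype.prod_option]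
  have prod_fibers : ∏ p, (Option.map (Prod.map id c) ⁻¹' {p}).ncard ^ w p =
      s ^ (Nat.card L * (Nat.card H * q)) := by
    simp [w, Fintype.prod_option, ncard_preimage_map_none, ncard_preimage_map_some, hc, ← pow_mul,
      mul_assoc, mul_comm q]
  rw [Nat.card_congr (Equiv.subtypeEquivRight (isEquicoloured_iff_ncard_preimage hι)),
    card_fun_comp_ncard_preimage_singleton, prod_fibers, ← prod_factorial, mul_right_comm,
    card_fun_ncard_preimage_singleton_mul_prod_factorial sum_w]

end Count

section ToDowlingElt

variable {ι L G : Type*}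

/-- Two points lie in a common nonzero block. -/
def Rel (f : Prepartition ι L G) (i j : ι) : Prop :=
  ∃ l a b, f i = some (l, a) ∧ f j = some (l, b)

open Classical in
/-- The relative label `γ(i)⁻¹ γ(j)` of two points in a common nonzero block, and `1` for unrelated
points. -/
noncomputable def relLabel [Group G] (f : Prepartition ι L G) (i j : ι) : G :=
  match f i, f j with
  | some (l, a), some (l', b) => if l = l' then a⁻¹ * b else 1
  | _, _ => 1

variable {f : Prepartition ι L G} {i j j' : ι} {l : L} {a b : G}

theorem setOf_rel_eq_block (hi : f i = some (l, a)) : {j | f.Rel i j} = f.block l := by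
  ext j
  simp [Rel, block, hi]

theorem Rel.symm (h : f.Rel i j) : f.Rel j i := by
  obtain ⟨l, a, b, hi, hj⟩ := h
  exact ⟨l, b, a, hj, hi⟩

theorem Rel.exists_eq_some (h : f.Rel i j) (h' : f.Rel j j') :
    ∃ l a b b', f i = some (l, a) ∧ f j = some (l, b) ∧ f j' = some (l, b') := by
  obtain ⟨l, a, b, hi, hj⟩ := h
  obtain ⟨l', b₁, b', hj₁, hj'⟩ := h'
  obtain ⟨rfl, rfl⟩ : l = l' ∧ b = b₁ := by simpa [hj] using hj₁
  exact ⟨l, a, b, b', hi, hj, hj'⟩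

variable [Group G]

theorem relLabel_eq (hi : f i = some (l, a)) (hj : f j = some (l, b)) :
    f.relLabel i j = a⁻¹ * b := by
  simp [relLabel, hi, hj]

theorem relLabel_of_not_rel (h : ¬ f.Rel i j) : f.relLabel i j = 1 := by
  unfold relLabel
  split
  next l a l' b hi hj =>
    refine if_neg ?_
    rintro rfl
    exact h ⟨l, a, b, hi, hj⟩
  next => rfl

theorem relLabel_self (f : Prepartition ι L G) (i : ι) : f.relLabel i i = 1 := by
  rcases hi : f i with _ | ⟨l, a⟩ <;> simp [relLabel, hi]

theorem Rel.relLabel_mul_relLabel (h : f.Rel i j) (h' : f.Rel j j') :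
    f.relLabel i j * f.relLabel j j' = f.relLabel i j' := by
  obtain ⟨l, a, b, b', hi, hj, hj'⟩ := h.exists_eq_some h'
  rw [relLabel_eq hi hj, relLabel_eq hj hj', relLabel_eq hi hj', mul_assoc, mul_inv_cancel_left]

/-- The element of the Dowling lattice represented by a prepartition. -/
noncomputable def toDowlingElt {N r : ℕ} (f : Prepartition (Fin N) L (rootsOfUnity r ℂ)) :
    DowlingElt N r where
  zero := f.zeroBlock
  rel := f.Rel
  lab i j := ((f.relLabel i j : ℂˣ) : ℂ)
  rel_compl i j := by
    rintro ⟨l, a, b, hi, hj⟩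
    simp [zeroBlock, hi, hj]
  rel_refl i hi := by
    obtain ⟨⟨l, a⟩, hla⟩ := Option.ne_none_iff_exists'.1 hi
    exact ⟨l, a, a, hla, hla⟩
  rel_symm _ _ h := h.symm
  rel_trans _ _ _ h h' := by
    obtain ⟨l, a, -, b', hi, -, hj'⟩ := h.exists_eq_some h'
    exact ⟨l, a, b', hi, hj'⟩
  lab_root i j := (mem_rootsOfUnity' _ _).1 (f.relLabel i j).2
  lab_one i j h := by simp [relLabel_of_not_rel h]
  lab_refl i := by simp [relLabel_self]
  lab_symm i j h := by
    rw [← Units.val_mul, ← Subgroup.coe_mul, h.relLabel_mul_relLabel h.symm, relLabel_self]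
    simp
  lab_cocycle i j j' h h' := by
    rw [← Units.val_mul, ← Subgroup.coe_mul, h.relLabel_mul_relLabel h']

end ToDowlingElt

section Order

variable {L L' : Type*} {N r : ℕ} {f : Prepartition (Fin N) L (rootsOfUnity r ℂ)}
  {g : Prepartition (Fin N) L' (rootsOfUnity r ℂ)}

theorem toDowlingElt_lab (i j : Fin N) : f.toDowlingElt.lab i j = ((f.relLabel i j : ℂˣ) : ℂ) :=
  rfl

theorem card_rel_toDowlingElt {i : Fin N} {l : L} {a : rootsOfUnity r ℂ}
    (hi : f i = some (l, a)) :
    Nat.card {j // f.toDowlingElt.rel i j} = (f.block l).ncard :=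
  congrArg Set.ncard (setOf_rel_eq_block hi)

theorem toDowlingElt_le_toDowlingElt_iff :
    f.toDowlingElt ≤ g.toDowlingElt ↔ f.zeroBlock ⊆ g.zeroBlock ∧
      ∀ i j, f.Rel i j → (i ∈ g.zeroBlock ∧ j ∈ g.zeroBlock) ∨
        (g.Rel i j ∧ g.relLabel i j = f.relLabel i j) := by
  refine and_congr_right fun _ => forall₂_congr fun i j => ?_
  refine imp_congr_right fun _ => or_congr_right (and_congr_right fun _ => ?_)
  exact rootsOfUnity.coe_injective.eq_iff

theorem toDowlingElt_le_merge (σ : L → Option (L' × rootsOfUnity r ℂ)) :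
    f.toDowlingElt ≤ (f.merge σ).toDowlingElt := by
  refine toDowlingElt_le_toDowlingElt_iff.2 ⟨fun i hi => merge_of_eq_none σ hi, ?_⟩
  rintro i j ⟨l, a, b, hi, hj⟩
  have mi := merge_of_eq_some σ hi
  have mj := merge_of_eq_some σ hj
  rcases hσ : σ l with _ | ⟨l', u⟩ <;> rw [hσ] at mi mj
  · exact Or.inl ⟨mi, mj⟩
  · refine Or.inr ⟨⟨l', u * a, u * b, mi, mj⟩, ?_⟩
    rw [relLabel_eq mi mj, relLabel_eq hi hj, mul_inv_rev, mul_assoc, inv_mul_cancel_left]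

theorem BlocksNonempty.exists_eq_merge_of_toDowlingElt_le (hf : f.BlocksNonempty)
    (hfg : f.toDowlingElt ≤ g.toDowlingElt) : ∃ σ, g = f.merge σ := by
  obtain ⟨zero_le, rel_le⟩ := toDowlingElt_le_toDowlingElt_iff.1 hfg
  choose base baseLabel hbase using hf
  refine ⟨fun l => (g (base l)).map fun p => (p.1, p.2 * (baseLabel l)⁻¹), funext fun i => ?_⟩
  rcases hi : f i with _ | ⟨l, a⟩
  · rw [merge_of_eq_none _ hi]
    exact zero_le hi
  rw [merge_of_eq_some _ hi]
  rcases rel_le _ _ ⟨l, _, a, hbase l, hi⟩ with ⟨hb, hi'⟩ | ⟨⟨l', b, b', hb, hi'⟩, hlab⟩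
  · simp only [zeroBlock, Set.mem_ofPred_eq] at hb hi'
    simp [hb, hi']
  · rw [relLabel_eq hb hi', relLabel_eq (hbase l) hi] at hlab
    simp [hb, hi', mul_assoc, ← hlab]

theorem toDowlingElt_relabel (π : L ≃ L') (u : L → rootsOfUnity r ℂ)
    (f : Prepartition (Fin N) L (rootsOfUnity r ℂ)) :
    (f.relabel π u).toDowlingElt = f.toDowlingElt := by
  refine DowlingElt.eq_of_le_of_le ?_ (toDowlingElt_le_merge _)
  conv_rhs => rw [← relabel_symm_relabel π u f]
  exact toDowlingElt_le_merge _

theorem zeroBlock_eq_of_toDowlingElt_eq (h : f.toDowlingElt = g.toDowlingElt) :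
    f.zeroBlock = g.zeroBlock :=
  congrArg DowlingElt.zero h

theorem rel_iff_of_toDowlingElt_eq (h : f.toDowlingElt = g.toDowlingElt) {i j : Fin N} :
    f.Rel i j ↔ g.Rel i j :=
  iff_of_eq (congrFun₂ (congrArg DowlingElt.rel h) i j)

theorem BlocksNonempty.exists_relabel_eq [Finite L] (hf : f.BlocksNonempty)
    {g : Prepartition (Fin N) L (rootsOfUnity r ℂ)} (h : g.toDowlingElt = f.toDowlingElt) :
    ∃ (π : Equiv.Perm L) (u : L → rootsOfUnity r ℂ), f.relabel π u = g := by
  obtain ⟨σ, rfl⟩ := hf.exists_eq_merge_of_toDowlingElt_le h.ge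
  have σ_ne_none (l : L) : σ l ≠ none := by
    intro hσ
    obtain ⟨i, a, hi⟩ := hf l
    have mem_zero : i ∈ (f.merge σ).zeroBlock := by
      simp only [zeroBlock, Set.mem_ofPred_eq, merge_of_eq_some σ hi, hσ, Option.map_none]
    rw [zeroBlock_eq_of_toDowlingElt_eq h] at mem_zero
    simp_all [zeroBlock]
  choose p hp using fun l => Option.ne_none_iff_exists'.1 (σ_ne_none l)
  have injective : Function.Injective fun l => (p l).1 := by
    intro l l' hll'
    obtain ⟨i, a, hi⟩ := hf l
    obtain ⟨j, b, hj⟩ := hf l'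
    have rel_merge : (f.merge σ).Rel i j := by simp_all [Rel, merge]
    obtain ⟨l₀, a', b', hi', hj'⟩ := (rel_iff_of_toDowlingElt_eq h).1 rel_merge
    simp_all
  refine ⟨Equiv.ofBijective _ (Finite.injective_iff_bijective.1 injective), fun l => (p l).2, ?_⟩
  simp [Prepartition.relabel, ← hp]

theorem BlocksNonempty.ncard_toDowlingElt_eq [Finite L] (hf : f.BlocksNonempty) :
    {g : Prepartition (Fin N) L (rootsOfUnity r ℂ) | g.toDowlingElt = f.toDowlingElt}.ncard =
      (Nat.card L).factorial * Nat.card (rootsOfUnity r ℂ) ^ Nat.card L := by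
  let relabelled (p : Equiv.Perm L × (L → rootsOfUnity r ℂ)) := f.relabel p.1 p.2
  have range_eq : {g : Prepartition (Fin N) L (rootsOfUnity r ℂ) |
      g.toDowlingElt = f.toDowlingElt} = Set.range relabelled := by
    ext g
    refine ⟨fun h => ?_, ?_⟩
    · obtain ⟨π, u, hg⟩ := hf.exists_relabel_eq h
      exact ⟨(π, u), hg⟩
    · rintro ⟨⟨π, u⟩, rfl⟩
      exact toDowlingElt_relabel π u f
  have injective : Function.Injective relabelled := by
    intro p p' h
    obtain ⟨hπ, hu⟩ := hf.relabel_inj h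
    exact Prod.ext (Equiv.coe_fn_injective hπ) hu
  rw [range_eq, Set.ncard_range_of_injective injective, Nat.card_prod, Nat.card_perm, Nat.card_fun]

end Order

end Prepartition

namespace DowlingElt

variable {N r : ℕ} (x : DowlingElt N r)

/-- The equivalence relation on the complement of the zero block whose classes are the nonzero
blocks. -/
def blockSetoid : Setoid {i // i ∉ x.zero} where
  r i j := x.rel i j
  iseqv :=
    ⟨fun i => x.rel_refl i i.2, fun h => x.rel_symm _ _ h, fun h h' => x.rel_trans _ _ _ h h'⟩

variable [NeZero r]

open Classical in
/-- A prepartition representing `x`, indexed by the nonzero blocks of `x`; in each block the labels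
are those relative to a chosen point. -/
noncomputable def toPrepartition :
    Prepartition (Fin N) (Quotient x.blockSetoid) (rootsOfUnity r ℂ) :=
  fun i => if hi : i ∉ x.zero then
    let l : Quotient x.blockSetoid := ⟦⟨i, hi⟩⟧
    some (l, rootsOfUnity.mkOfPowEq (x.lab l.out i) (x.lab_root l.out i))
  else none

variable {x}

theorem zeroBlock_toPrepartition : x.toPrepartition.zeroBlock = x.zero := by
  ext i
  simp [Prepartition.zeroBlock, toPrepartition]

theorem exists_toPrepartition_eq_some {i : Fin N} (hi : i ∉ x.zero) :
    ∃ a : rootsOfUnity r ℂ, x.toPrepartition i = some (⟦⟨i, hi⟩⟧, a) ∧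
      ((a : ℂˣ) : ℂ) = x.lab (⟦⟨i, hi⟩⟧ : Quotient x.blockSetoid).out i :=
  ⟨_, dif_pos hi, rfl⟩

theorem blocksNonempty_toPrepartition : x.toPrepartition.BlocksNonempty := by
  intro l
  obtain ⟨a, hla, -⟩ := exists_toPrepartition_eq_some l.out.2
  refine ⟨l.out, a, ?_⟩
  rwa [Subtype.coe_eta, Quotient.out_eq] at hla

theorem eq_mk_of_toPrepartition_eq_some {i : Fin N} {l : Quotient x.blockSetoid}
    {a : rootsOfUnity r ℂ} (h : x.toPrepartition i = some (l, a)) :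
    ∃ hi : i ∉ x.zero, l = ⟦⟨i, hi⟩⟧ := by
  by_cases hi : i ∈ x.zero
  · simp [toPrepartition, hi] at h
  · obtain ⟨b, hb, -⟩ := exists_toPrepartition_eq_some hi
    exact ⟨hi, congrArg Prod.fst (Option.some_injective _ (h.symm.trans hb))⟩

theorem rel_toPrepartition_iff {i j : Fin N} : x.toPrepartition.Rel i j ↔ x.rel i j := by
  constructor
  · rintro ⟨l, a, b, hla, hlb⟩
    obtain ⟨hi, rfl⟩ := eq_mk_of_toPrepartition_eq_some hla
    obtain ⟨hj, class_eq⟩ := eq_mk_of_toPrepartition_eq_some hlb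
    exact Quotient.exact class_eq
  · intro h
    obtain ⟨hi, hj⟩ := x.rel_compl i j h
    obtain ⟨a, hia, -⟩ := exists_toPrepartition_eq_some hi
    obtain ⟨b, hjb, -⟩ := exists_toPrepartition_eq_some hj
    have class_eq : (⟦⟨i, hi⟩⟧ : Quotient x.blockSetoid) = ⟦⟨j, hj⟩⟧ := Quotient.sound h
    exact ⟨_, a, b, hia, class_eq ▸ hjb⟩

theorem toDowlingElt_toPrepartition : x.toPrepartition.toDowlingElt = x := by
  refine ext_of_rel zeroBlock_toPrepartition (fun _ _ => rel_toPrepartition_iff) fun i j hij => ?_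
  replace hij := rel_toPrepartition_iff.1 hij
  obtain ⟨hi, hj⟩ := x.rel_compl i j hij
  obtain ⟨a, hia, ha⟩ := exists_toPrepartition_eq_some hi
  obtain ⟨b, hjb, hb⟩ := exists_toPrepartition_eq_some hj
  have class_eq : (⟦⟨j, hj⟩⟧ : Quotient x.blockSetoid) = ⟦⟨i, hi⟩⟧ :=
    Quotient.sound (x.rel_symm i j hij)
  rw [class_eq] at hjb hb
  have rel_base : x.rel (⟦⟨i, hi⟩⟧ : Quotient x.blockSetoid).out i :=
    Quotient.mk_out (s := x.blockSetoid) ⟨i, hi⟩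
  rw [Prepartition.toDowlingElt_lab, Prepartition.relLabel_eq hia hjb, Subgroup.coe_mul,
    Subgroup.coe_inv, Units.val_mul, Units.inv_mul_eq_iff_eq_mul, ha, hb]
  exact x.lab_cocycle _ i j rel_base hij

end DowlingElt

namespace Prepartition

section EvenlyColoured

variable {N k s q : ℕ} {L : Type*} {f : Prepartition (Fin N) L (rootsOfUnity (k * s) ℂ)}
  {i : Fin N} {l : L} {a : rootsOfUnity (k * s) ℂ}

theorem card_rel_lab_toDowlingElt [NeZero k] (hi : f i = some (l, a)) (z : rootsOfUnity k ℂ) :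
    Nat.card {j // f.toDowlingElt.rel i j ∧
        f.toDowlingElt.lab i j ^ (k * s / k) = ((z : ℂˣ) : ℂ)} =
      (f.colourClass (colour k s) l (colour k s a * z)).ncard := by
  have lab_pow_eq_iff {j : Fin N} {b : rootsOfUnity (k * s) ℂ} (hj : f j = some (l, b)) :
      f.toDowlingElt.lab i j ^ (k * s / k) = ((z : ℂˣ) : ℂ) ↔
        colour k s b = colour k s a * z := by
    rw [Nat.mul_div_cancel_left s (NeZero.pos k), toDowlingElt_lab, relLabel_eq hi hj,
      ← coe_colour, rootsOfUnity.coe_injective.eq_iff, map_mul, map_inv, inv_mul_eq_iff_eq_mul]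
  refine congrArg Set.ncard (Set.ext fun j => ⟨?_, ?_⟩)
  · rintro ⟨⟨l', a', b, hi', hj⟩, hlab⟩
    obtain ⟨rfl, rfl⟩ : l = l' ∧ a = a' := by simpa [hi] using hi'
    exact ⟨b, hj, (lab_pow_eq_iff hj).1 hlab⟩
  · rintro ⟨b, hj, hb⟩
    exact ⟨⟨l, a, b, hi, hj⟩, (lab_pow_eq_iff hj).2 hb⟩

theorem IsEvenlyColoured.dDiv_toDowlingElt [NeZero k] (hf : f.IsEvenlyColoured (colour k s) q) :
    DDiv (k * q) f.toDowlingElt := by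
  intro i hi
  obtain ⟨⟨l, a⟩, hla⟩ := Option.ne_none_iff_exists'.1 hi
  obtain ⟨m, hm⟩ := hf l
  rw [card_rel_toDowlingElt hla, ncard_block_of_forall_ncard_colourClass hm,
    Complex.card_rootsOfUnity]
  exact mul_dvd_mul_left k (Nat.dvd_mul_left q m)

theorem IsEvenlyColoured.evenCol_toDowlingElt [NeZero k]
    (hf : f.IsEvenlyColoured (colour k s) q) : EvenCol k f.toDowlingElt := by
  intro i hi ξ ζ hξ hζ
  obtain ⟨⟨l, a⟩, hla⟩ := Option.ne_none_iff_exists'.1 hi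
  obtain ⟨m, hm⟩ := hf l
  have card_eq (ξ : ℂ) (hξ : ξ ^ k = 1) :=
    (card_rel_lab_toDowlingElt hla (rootsOfUnity.mkOfPowEq ξ hξ)).trans (hm _)
  exact (card_eq ξ hξ).trans (card_eq ζ hζ).symm

theorem isEvenlyColoured_of_dDiv_of_evenCol [NeZero k] (ddiv : DDiv (k * q) f.toDowlingElt)
    (evenCol : EvenCol k f.toDowlingElt) : f.IsEvenlyColoured (colour k s) q := by
  intro l
  by_cases empty : ∀ z, f.colourClass (colour k s) l z = ∅
  · exact ⟨0, fun z => by rw [empty z, Set.ncard_empty, zero_mul]⟩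
  obtain ⟨z₀, i, a, hi, -⟩ : ∃ z, (f.colourClass (colour k s) l z).Nonempty := by
    simpa only [not_forall, ← Set.nonempty_iff_ne_empty] using empty
  have hi' : i ∉ f.toDowlingElt.zero := fun h => Option.some_ne_none _ (hi.symm.trans h)
  have ncard_eq (z : rootsOfUnity k ℂ) :
      (f.colourClass (colour k s) l z).ncard = (f.colourClass (colour k s) l z₀).ncard := by
    have root (z : rootsOfUnity k ℂ) : ((z : ℂˣ) : ℂ) ^ k = 1 := (mem_rootsOfUnity' _ _).1 z.2
    have card_eq := evenCol i hi' _ _ (root ((colour k s a)⁻¹ * z)) (root ((colour k s a)⁻¹ * z₀))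
    rwa [card_rel_lab_toDowlingElt hi, card_rel_lab_toDowlingElt hi, mul_inv_cancel_left,
      mul_inv_cancel_left] at card_eq
  have dvd := ddiv i hi'
  rw [card_rel_toDowlingElt hi, ncard_block_of_forall_ncard_colourClass ncard_eq,
    Complex.card_rootsOfUnity] at dvd
  obtain ⟨m, hm⟩ := Nat.dvd_of_mul_dvd_mul_left (NeZero.pos k) dvd
  exact ⟨m, fun z => by rw [ncard_eq z, hm, mul_comm]⟩

theorem isEvenlyColoured_iff [NeZero k] : f.IsEvenlyColoured (colour k s) q ↔
    DDiv (k * q) f.toDowlingElt ∧ EvenCol k f.toDowlingElt :=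
  ⟨fun h => ⟨h.dDiv_toDowlingElt, h.evenCol_toDowlingElt⟩,
    fun h => isEvenlyColoured_of_dDiv_of_evenCol h.1 h.2⟩

end EvenlyColoured

section Minimal

variable {N k s q : ℕ} [NeZero k] {L : Type*}
  {f : Prepartition (Fin N) L (rootsOfUnity (k * s) ℂ)}

theorem exists_block_subset_of_minimal
    (hf : Minimal (fun x => DDiv (k * q) x ∧ EvenCol k x) f.toDowlingElt) {T : Set (Fin N)}
    {γ : Fin N → rootsOfUnity (k * s) ℂ} {o : Option L} (nonempty : T.Nonempty)
    (hT : ∀ i ∈ T, f i = o.map fun l => (l, γ i))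
    (hq : ∀ z, {i ∈ T | colour k s (γ i) = z}.ncard = q) : ∃ l, o = some l ∧ f.block l ⊆ T := by
  have split_le : (f.split T γ).toDowlingElt ≤ f.toDowlingElt := by
    conv_rhs => rw [← merge_split hT]
    exact toDowlingElt_le_merge _
  have split_mem := isEvenlyColoured_iff.1 ((isEvenlyColoured_iff.2 hf.prop).split hT hq)
  obtain ⟨zero_subset, rel_imp⟩ :=
    toDowlingElt_le_toDowlingElt_iff.1 (hf.le_of_le split_mem split_le)
  obtain ⟨i, hi⟩ := nonempty
  have notMem_zero : i ∉ (f.split T γ).zeroBlock := by simp [zeroBlock, split_of_mem hi]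
  cases o with
  | none => exact absurd (zero_subset (hT i hi)) notMem_zero
  | some l =>
    refine ⟨l, rfl, fun j ⟨b, hj⟩ => ?_⟩
    obtain ⟨⟨l', a', b', hi', hj'⟩, -⟩ :=
      (rel_imp i j ⟨l, γ i, b, hT i hi, hj⟩).resolve_left fun h => notMem_zero h.1
    obtain ⟨rfl, -⟩ : none = l' ∧ γ i = a' := by simpa [split_of_mem hi] using hi'
    by_contra hjT
    simp [split_of_notMem hjT, hj] at hj'

theorem ncard_zeroBlock_lt_of_minimal [NeZero s] [NeZero q]
    (hf : Minimal (fun x => DDiv (k * q) x ∧ EvenCol k x) f.toDowlingElt) :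
    f.zeroBlock.ncard < k * q := by
  by_contra! le
  obtain ⟨T, T_subset, ncard_T⟩ := Set.exists_subset_card_eq le
  obtain ⟨z, hz⟩ := exists_ncard_sep_eq (β := rootsOfUnity k ℂ) T.toFinite
    (by rw [ncard_T, Complex.card_rootsOfUnity])
  have T_nonempty : T.Nonempty := Set.nonempty_of_ncard_ne_zero (by simp [ncard_T, NeZero.ne])
  choose γ hγ using fun i => colour_surjective (k := k) (s := s) (z i)
  obtain ⟨l, hl, -⟩ := exists_block_subset_of_minimal hf (γ := γ) (o := none) T_nonempty T_subset
    (by simpa only [hγ] using hz)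
  exact Option.some_ne_none l hl.symm

theorem BlocksNonempty.isEquicoloured_of_minimal [NeZero q] (hne : f.BlocksNonempty)
    (hf : Minimal (fun x => DDiv (k * q) x ∧ EvenCol k x) f.toDowlingElt) :
    f.IsEquicoloured (colour k s) q := by
  intro l
  obtain ⟨T, T_subset, ncard_T⟩ :=
    (isEvenlyColoured_iff.2 hf.prop).exists_subset_block (hne l)
  let γ (i : Fin N) : rootsOfUnity (k * s) ℂ := (f i).elim 1 Prod.snd
  have eq_some : ∀ i ∈ T, f i = (some l).map fun l => (l, γ i) := by
    intro i hi
    obtain ⟨a, ha⟩ := T_subset hi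
    simp [γ, ha]
  have T_nonempty : T.Nonempty :=
    (Set.nonempty_of_ncard_ne_zero ((ncard_T 1).trans_ne (NeZero.ne q))).mono Set.inter_subset_right
  obtain ⟨l', hl', block_subset⟩ := exists_block_subset_of_minimal hf T_nonempty eq_some
    (by simpa only [colourClass_inter_eq eq_some, true_and] using ncard_T)
  obtain rfl : l = l' := Option.some_injective L hl'
  intro z
  rw [← ncard_T z, Set.inter_eq_left.2 ((colourClass_subset_block _ f l z).trans block_subset)]

theorem IsEquicoloured.minimal_toDowlingElt [NeZero s] [Finite L]
    (hf : f.IsEquicoloured (colour k s) q) (zero_lt : f.zeroBlock.ncard < k * q) :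
    Minimal (fun x => DDiv (k * q) x ∧ EvenCol k x) f.toDowlingElt := by
  refine ⟨isEvenlyColoured_iff.1 hf.isEvenlyColoured, fun y hy hyf => ?_⟩
  refine DowlingElt.le_of_le_of_ncard_le hyf ?_ fun i hi => ?_
  · have y_even : y.toPrepartition.IsEvenlyColoured (colour k s) q :=
      isEvenlyColoured_iff.2 (by rwa [DowlingElt.toDowlingElt_toPrepartition])
    have modEq := hf.isEvenlyColoured.ncard_zeroBlock_modEq.trans y_even.ncard_zeroBlock_modEq.symm
    rw [Complex.card_rootsOfUnity, DowlingElt.zeroBlock_toPrepartition] at modEq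
    exact (Nat.mod_eq_of_lt zero_lt).symm.trans_le (modEq.trans_le (Nat.mod_le _ _))
  · obtain ⟨⟨l, a⟩, hla⟩ := Option.ne_none_iff_exists'.1 hi
    have hiy : i ∉ y.zero := fun h => hi (hyf.1 h)
    have ncard_block : (f.block l).ncard = k * q := by
      rw [ncard_block_of_forall_ncard_colourClass (hf l), Complex.card_rootsOfUnity]
    calc {j | f.toDowlingElt.rel i j}.ncard = k * q :=
          (card_rel_toDowlingElt hla).trans ncard_block
      _ ≤ {j | y.rel i j}.ncard :=
          Nat.le_of_dvd ((Set.ncard_pos).2 ⟨i, y.rel_refl i hiy⟩) (hy.1 i hiy)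

theorem BlocksNonempty.minimal_toDowlingElt_iff [NeZero s] [NeZero q] [Finite L]
    (hf : f.BlocksNonempty) :
    Minimal (fun x => DDiv (k * q) x ∧ EvenCol k x) f.toDowlingElt ↔
      f.IsEquicoloured (colour k s) q ∧ f.zeroBlock.ncard < k * q :=
  ⟨fun h => ⟨hf.isEquicoloured_of_minimal h, ncard_zeroBlock_lt_of_minimal h⟩,
    fun h => h.1.minimal_toDowlingElt h.2⟩

end Minimal

section CountMinimal

variable {k s q n e : ℕ} [NeZero k] [NeZero s]

theorem IsEquicoloured.minimal_toDowlingElt_fin (he : e < k * q)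
    {f : Prepartition (Fin (k * q * n + e)) (Fin n) (rootsOfUnity (k * s) ℂ)}
    (hf : f.IsEquicoloured (colour k s) q) :
    Minimal (fun x => DDiv (k * q) x ∧ EvenCol k x) f.toDowlingElt := by
  refine hf.minimal_toDowlingElt ?_
  have count := hf.ncard_zeroBlock_add
  rw [Nat.card_fin, Nat.card_fin, Complex.card_rootsOfUnity, mul_comm n] at count
  omega

variable [NeZero q]

theorem exists_isEquicoloured_of_minimal (he : e < k * q)
    {x : DowlingElt (k * q * n + e) (k * s)}
    (hx : Minimal (fun x => DDiv (k * q) x ∧ EvenCol k x) x) :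
    ∃ f : Prepartition (Fin (k * q * n + e)) (Fin n) (rootsOfUnity (k * s) ℂ),
      f.IsEquicoloured (colour k s) q ∧ f.toDowlingElt = x := by
  obtain ⟨L, _, f, f_nonempty, rfl⟩ : ∃ (L : Type) (_ : Finite L) (f : Prepartition _ L _),
      f.BlocksNonempty ∧ f.toDowlingElt = x :=
    ⟨_, inferInstance, x.toPrepartition, DowlingElt.blocksNonempty_toPrepartition,
      DowlingElt.toDowlingElt_toPrepartition⟩
  obtain ⟨f_equi, zero_lt⟩ := f_nonempty.minimal_toDowlingElt_iff.1 hx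
  have card_L : Nat.card L = n := by
    have count := f_equi.ncard_zeroBlock_add
    rw [Nat.card_fin, Complex.card_rootsOfUnity, mul_comm (Nat.card L)] at count
    have div_eq := congrArg (· / (k * q)) count
    simpa [Nat.add_mul_div_left, Nat.mul_add_div, Nat.div_eq_of_lt, he, zero_lt, NeZero.pos]
      using div_eq
  let g := f.relabel (Finite.equivFinOfCardEq card_L) 1
  have g_eq : g.toDowlingElt = f.toDowlingElt := toDowlingElt_relabel _ _ f
  exact ⟨g, (f_nonempty.relabel _ _).isEquicoloured_of_minimal (g_eq ▸ hx), g_eq⟩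

theorem card_isEquicoloured_eq_card_minimal_mul (he : e < k * q) :
    Nat.card {f : Prepartition (Fin (k * q * n + e)) (Fin n) (rootsOfUnity (k * s) ℂ) //
        f.IsEquicoloured (colour k s) q} =
      Nat.card {x : DowlingElt (k * q * n + e) (k * s) //
        Minimal (fun x => DDiv (k * q) x ∧ EvenCol k x) x} *
        (n.factorial * (k * s) ^ n) := by
  let toMinimal (f : {f : Prepartition (Fin (k * q * n + e)) (Fin n) (rootsOfUnity (k * s) ℂ) //
      f.IsEquicoloured (colour k s) q}) : {x : DowlingElt (k * q * n + e) (k * s) //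
        Minimal (fun x => DDiv (k * q) x ∧ EvenCol k x) x} :=
    ⟨f.1.toDowlingElt, f.2.minimal_toDowlingElt_fin he⟩
  refine card_eq_card_mul_of_ncard_preimage_singleton (f := toMinimal) fun ⟨x, hx⟩ => ?_
  obtain ⟨f, hf, rfl⟩ := exists_isEquicoloured_of_minimal he hx
  have image_eq : Subtype.val '' (toMinimal ⁻¹' {⟨f.toDowlingElt, hx⟩}) =
      {g | g.toDowlingElt = f.toDowlingElt} := by
    ext g
    constructor
    · rintro ⟨g, hg, rfl⟩
      exact congrArg Subtype.val hg
    · intro hg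
      obtain ⟨π, u, rfl⟩ := hf.blocksNonempty.exists_relabel_eq hg
      have relabel_equi := (hf.blocksNonempty.relabel π u).isEquicoloured_of_minimal (hg ▸ hx)
      exact ⟨⟨_, relabel_equi⟩, Subtype.ext hg, rfl⟩
  rw [← Set.ncard_image_of_injective _ Subtype.val_injective, image_eq,
    hf.blocksNonempty.ncard_toDowlingElt_eq, Nat.card_fin, Complex.card_rootsOfUnity]

theorem card_minimal_mul (he : e < k * q) :
    Nat.card {x : DowlingElt (k * q * n + e) (k * s) //
        Minimal (fun x => DDiv (k * q) x ∧ EvenCol k x) x} *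
        (n.factorial * e.factorial * q.factorial ^ (k * n) * k ^ (k * q * n)) =
      (k * q * n + e).factorial * (k * s) ^ ((k * q - 1) * n) := by
  have count := card_isEquicoloured_mul (ι := Fin (k * q * n + e)) (L := Fin n) (q := q) (e := e)
    (ncard_colour_fiber (k := k) (s := s))
    (by rw [Nat.card_fin, Nat.card_fin, Complex.card_rootsOfUnity, mul_comm n])
  rw [card_isEquicoloured_eq_card_minimal_mul he, Nat.card_fin, Nat.card_fin,
    Complex.card_rootsOfUnity, mul_comm n, mul_comm n] at count
  have pow_mul_pow :
      (k * s) ^ ((k * q - 1) * n) * (k * s) ^ n = s ^ (k * q * n) * k ^ (k * q * n) := by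
    rw [← pow_add, Nat.sub_one_mul, Nat.sub_add_cancel (Nat.le_mul_of_pos_left n (NeZero.pos _)),
      mul_pow, mul_comm]
  refine Nat.eq_of_mul_eq_mul_right (pow_pos (NeZero.pos (k * s)) n) ?_
  rw [mul_assoc (k * q * n + e).factorial, pow_mul_pow, ← mul_assoc (k * q * n + e).factorial,
    ← count]
  ring

end CountMinimal

end Prepartition

/-- The number of minimal elements of the poset
`S_n^{(d,e,k)} = Q_{dn+e}(r, d, k) ∖ {0̂}` (the `k`-evenly coloured `d`-divisible Dowling
lattice over `μ_r` on `dn + e` points, with the adjoined minimum removed) is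
`N(n) = (dn+e)! r^{(d-1)n} / (n! e! ((d/k)!)^{kn} k^{dn})`. -/
theorem card_minimal_QnRDK (d n e k r : ℕ) (hd : 0 < d) (hk : 0 < k) (hr : 0 < r)
    (hkd : k ∣ d) (hkr : k ∣ r) (he : e < d) :
    Nat.card {x : DowlingElt (d * n + e) r //
        DDiv d x ∧ EvenCol k x ∧
        ∀ y : DowlingElt (d * n + e) r, DDiv d y → EvenCol k y → y ≤ x → x ≤ y} =
      (d * n + e).factorial * r ^ ((d - 1) * n) /
        (n.factorial * e.factorial * ((d / k).factorial) ^ (k * n) * k ^ (d * n)) := by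
  obtain ⟨q, rfl⟩ := hkd
  obtain ⟨s, rfl⟩ := hkr
  have : NeZero k := ⟨hk.ne'⟩
  have : NeZero s := ⟨(pos_of_mul_pos_right hr hk.le).ne'⟩
  have : NeZero q := ⟨(pos_of_mul_pos_right hd hk.le).ne'⟩
  have minimal_iff (x : DowlingElt (k * q * n + e) (k * s)) :
      (DDiv (k * q) x ∧ EvenCol k x ∧ ∀ y, DDiv (k * q) y → EvenCol k y → y ≤ x → x ≤ y) ↔
        Minimal (fun x => DDiv (k * q) x ∧ EvenCol k x) x := by
    simp only [Minimal, and_imp, and_assoc]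
  rw [Nat.card_congr (Equiv.subtypeEquivRight minimal_iff), Nat.mul_div_cancel_left q hk]
  exact (Nat.div_eq_of_eq_mul_left (by positivity) (Prepartition.card_minimal_mul he).symm).symm
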